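/- ∫₀¹ x·log Γ(x)·cos(2πx) dx = 1/8 − C/(2π²) − (1/(2π²))·∑_{n=2}^∞ (log n)/(n² − 1), where C = log(2π) + γ. -/

import Mathlib

open Real

open Filter Topology MeasureTheory Set

/-- The kernel `(1 - cos (c x)) / x` is continuous on the whole line. -/
lemma continuous_one_sub_cos_div (c : ℝ) : Continuous fun x : ℝ => (1 - cos (c * x)) / x := by
  have h : (fun x : ℝ => (1 - cos (c * x)) / x) =
      fun x => c * sin (c * x / 2) * sinc (c * x / 2) := by
    funext x
    by_cases hx : c * x / 2 = 0
    · have : c * x = 0 := by linarith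
      simp [this]
    · have hc : c ≠ 0 := by rintro rfl; simp at hx
      have hx0 : x ≠ 0 := by rintro rfl; simp at hx
      rw [sinc_of_ne_zero hx]
      have : cos (c * x) = 1 - 2 * sin (c * x / 2) ^ 2 := by
        rw [← cos_sq_add_sin_sq (c * x / 2)]
        have := cos_two_mul' (c * x / 2)
        rw [mul_div_cancel₀ _ two_ne_zero] at this
        rw [this]; ring
      rw [this]
      field_simp
      ring
  rw [h]
  have := continuous_sinc
  fun_prop

lemma sinc_pos {x : ℝ} (h0 : 0 ≤ x) (h1 : x < π) : 0 < sinc x := by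
  rcases h0.eq_or_lt with rfl | h0
  · simp
  · rw [sinc_of_ne_zero h0.ne']
    exact div_pos (sin_pos_of_pos_of_lt_pi h0 h1) h0

/-- The difference between the kernels `1 / x` and `(π / 2) cot (π x / 2)`. -/
noncomputable def cotRemainder (x : ℝ) : ℝ :=
  1 / x - π / 2 * (cos (π / 2 * x) / sin (π / 2 * x))

lemma hasDerivAt_neg_log_sinc {x : ℝ} (hx : x ∈ Ioo (0 : ℝ) 1) :
    HasDerivAt (fun x => -log (sinc (π / 2 * x))) (cotRemainder x) x := by
  have hpi := pi_pos
  have hx0 : 0 < π / 2 * x := mul_pos (by positivity) hx.1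
  have hs : 0 < sin (π / 2 * x) := sin_pos_of_pos_of_lt_pi hx0 (by nlinarith [hx.2])
  have h1 : HasDerivAt (fun x => log (π / 2 * x) - log (sin (π / 2 * x))) (cotRemainder x) x := by
    have e : HasDerivAt (fun x : ℝ => π / 2 * x) (π / 2) x := by
      simpa using (hasDerivAt_id x).const_mul (π / 2)
    convert! (e.log hx0.ne').sub (e.sin.log hs.ne') using 1
    unfold cotRemainder
    have := hx.1.ne'
    field_simp
  refine h1.congr_of_eventuallyEq ?_
  filter_upwards [isOpen_Ioo.mem_nhds hx] with y hy
  have hy0 : 0 < π / 2 * y := mul_pos (by positivity) hy.1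
  have hs : 0 < sin (π / 2 * y) := sin_pos_of_pos_of_lt_pi hy0 (by nlinarith [hy.2])
  rw [sinc_of_ne_zero hy0.ne', log_div hs.ne' hy0.ne']
  ring

lemma continuousOn_neg_log_sinc :
    ContinuousOn (fun x => -log (sinc (π / 2 * x))) (Icc 0 1) := by
  have := continuous_sinc
  have hpi := pi_pos
  refine (ContinuousOn.log (by fun_prop) fun x hx => ?_).neg
  exact (sinc_pos (mul_nonneg (by positivity) hx.1) (by nlinarith [hx.2])).ne'

lemma cotRemainder_nonneg {x : ℝ} (hx : x ∈ Ioo (0 : ℝ) 1) : 0 ≤ cotRemainder x := by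
  have hpi := pi_pos
  have hx0 : 0 < π / 2 * x := mul_pos (by positivity) hx.1
  have hs : 0 < sin (π / 2 * x) := sin_pos_of_pos_of_lt_pi hx0 (by nlinarith [hx.2])
  have hc : 0 < cos (π / 2 * x) := cos_pos_of_mem_Ioo ⟨by linarith, by nlinarith [hx.2]⟩
  have ht := lt_tan hx0 (by nlinarith [hx.2])
  rw [tan_eq_sin_div_cos, lt_div_iff₀ hc] at ht
  have := hx.1
  unfold cotRemainder
  rw [← mul_div_assoc, sub_nonneg, div_le_div_iff₀ hs this]
  linarith

lemma intervalIntegrable_cotRemainder : IntervalIntegrable cotRemainder volume 0 1 := by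
  refine intervalIntegral.intervalIntegrable_deriv_of_nonneg
    (g := fun x => -log (sinc (π / 2 * x))) ?_ ?_ ?_
  · simpa using continuousOn_neg_log_sinc
  · simpa using fun x h0 h1 => hasDerivAt_neg_log_sinc ⟨h0, h1⟩
  · simpa using fun x h0 h1 => cotRemainder_nonneg ⟨h0, h1⟩

lemma integral_cotRemainder : ∫ x in (0 : ℝ)..1, cotRemainder x = log (π / 2) := by
  rw [intervalIntegral.integral_eq_sub_of_hasDerivAt_of_le zero_le_one continuousOn_neg_log_sinc
    (fun x hx => hasDerivAt_neg_log_sinc hx) intervalIntegrable_cotRemainder]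
  have hpi := pi_pos
  rw [mul_one, mul_zero, sinc_zero, sinc_of_ne_zero (by positivity), sin_pi_div_two, one_div,
    log_inv]
  simp

lemma tendsto_integral_cos_mul {r : ℝ → ℝ} (hr : IntervalIntegrable r volume 0 1) :
    Tendsto (fun K : ℕ => ∫ x in (0 : ℝ)..1, cos (2 * π * K * x) * r x) atTop (𝓝 0) := by
  have h := Real.tendsto_integral_exp_smul_cocompact
    (indicator (Ioc 0 1) fun x => (r x : ℂ))
  have hK : Tendsto (fun K : ℕ => (K : ℝ)) atTop (cocompact ℝ) :=
    tendsto_natCast_atTop_atTop.mono_right atTop_le_cocompact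
  have h2 := (Complex.continuous_re.tendsto _).comp (h.comp hK)
  rw [Complex.zero_re] at h2
  refine h2.congr fun K => ?_
  simp only [Function.comp_apply]
  have e : (∫ v : ℝ, Real.fourierChar (-(v * (K : ℝ))) • indicator (Ioc 0 1) (fun x => (r x : ℂ)) v)
      = ∫ v in Ioc (0 : ℝ) 1, Real.fourierChar (-(v * (K : ℝ))) • (r v : ℂ) := by
    rw [← integral_indicator measurableSet_Ioc]
    congr 1; funext v
    by_cases hv : v ∈ Ioc (0 : ℝ) 1 <;> simp [hv]
  have hi : IntegrableOn (fun v => Real.fourierChar (-(v * (K : ℝ))) • (r v : ℂ)) (Ioc 0 1) := by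
    have := (intervalIntegrable_iff_integrableOn_Ioc_of_le zero_le_one).1 hr
    have hC : IntegrableOn (fun v => (r v : ℂ)) (Ioc 0 1) := this.ofReal
    refine Integrable.mono hC ?_ ?_
    · refine AEStronglyMeasurable.smul ?_ hC.1
      exact (by fun_prop : Continuous fun v : ℝ =>
        (Real.fourierChar (-(v * (K : ℝ))) : ℂ)).aestronglyMeasurable
    · simp
  rw [e, ← RCLike.re_eq_complex_re, ← integral_re hi, intervalIntegral.integral_of_le zero_le_one]
  congr 1; funext v
  rw [Circle.smul_def, Real.fourierChar_apply, smul_eq_mul, RCLike.re_eq_complex_re,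
    Complex.re_mul_ofReal, ← cos_neg, Complex.exp_ofReal_mul_I_re]
  congr 2; ring

lemma integral_sin_const_mul {a : ℝ} (ha : a ≠ 0) :
    ∫ x in (0 : ℝ)..1, sin (a * x) = (1 - cos a) / a := by
  rw [intervalIntegral.integral_comp_mul_left (fun x => sin x) ha]
  simp; field_simp

lemma integral_sin_two_pi (k : ℕ) : ∫ x in (0 : ℝ)..1, sin (2 * π * k * x) = 0 := by
  rcases eq_or_ne k 0 with rfl | hk
  · simp
  · rw [integral_sin_const_mul (by positivity), show 2 * π * k = k * (2 * π) by ring,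
      cos_nat_mul_two_pi]
    simp

lemma sum_one_div_odd_eq_harmonic (K : ℕ) :
    ∑ j ∈ Finset.range K, 2 / (2 * (j : ℝ) + 1) = 2 * harmonic (2 * K) - harmonic K := by
  induction K with
  | zero => simp
  | succ K ih =>
    rw [Finset.sum_range_succ, ih, show 2 * (K + 1) = 2 * K + 1 + 1 by ring, harmonic_succ,
      harmonic_succ, harmonic_succ]
    push_cast
    field_simp
    ring

lemma tendsto_sum_one_div_odd :
    Tendsto (fun K : ℕ => ∑ j ∈ Finset.range K, 2 / (2 * (j : ℝ) + 1) - log (4 * K)) atTop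
      (𝓝 eulerMascheroniConstant) := by
  have h1 := tendsto_harmonic_sub_log
  have h2 := h1.comp (tendsto_id.const_mul_atTop' (show 0 < 2 by norm_num))
  have h3 := (h2.const_mul 2).sub h1
  rw [show 2 * eulerMascheroniConstant - eulerMascheroniConstant = eulerMascheroniConstant by ring]
    at h3
  refine h3.congr' ?_
  filter_upwards [eventually_gt_atTop 0] with K hK
  have hK' : (K : ℝ) ≠ 0 := by positivity
  rw [sum_one_div_odd_eq_harmonic]
  simp only [Function.comp_apply, id]
  push_cast
  rw [log_mul (by norm_num) hK', log_mul (by norm_num) hK', show (4 : ℝ) = 2 ^ 2 by norm_num,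
    log_pow]
  push_cast; ring

lemma integral_conj_kernel (K : ℕ) :
    ∫ x in (0 : ℝ)..1, ((1 - cos (2 * π * K * x)) / x - (1 - cos (2 * π * K * x)) * cotRemainder x)
      = ∑ j ∈ Finset.range K, 2 / (2 * (j : ℝ) + 1) := by
  have hint (K : ℕ) : IntervalIntegrable (fun x => (1 - cos (2 * π * K * x)) / x -
      (1 - cos (2 * π * K * x)) * cotRemainder x) volume 0 1 :=
    ((continuous_one_sub_cos_div _).intervalIntegrable 0 1).sub
      (intervalIntegrable_cotRemainder.continuousOn_mul (by fun_prop))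
  induction K with
  | zero => simp
  | succ K ih =>
    rw [Finset.sum_range_succ, ← ih, ← sub_eq_iff_eq_add', ← intervalIntegral.integral_sub
      (hint _) (hint _)]
    have : ∫ x in (0 : ℝ)..1, π * sin (π * (2 * K + 1) * x) + π / 2 * sin (2 * π * (K + 1 : ℕ) * x)
        + π / 2 * sin (2 * π * K * x) = 2 / (2 * K + 1) := by
      rw [intervalIntegral.integral_add (by apply Continuous.intervalIntegrable; fun_prop)
        (by apply Continuous.intervalIntegrable; fun_prop),
        intervalIntegral.integral_add (by apply Continuous.intervalIntegrable; fun_prop)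
        (by apply Continuous.intervalIntegrable; fun_prop)]
      simp only [intervalIntegral.integral_const_mul, integral_sin_two_pi]
      rw [integral_sin_const_mul (by positivity),
        show π * (2 * K + 1) = K * (2 * π) + π by ring, cos_add_pi, cos_nat_mul_two_pi]
      have := pi_pos
      field_simp
      ring
    rw [← this]
    refine intervalIntegral.integral_congr_ae (ae_of_all _ fun x hx => ?_)
    rw [uIoc_of_le zero_le_one] at hx
    have hpi := pi_pos
    have hx0 : 0 < π / 2 * x := mul_pos (by positivity) hx.1
    have hs : 0 < sin (π / 2 * x) := sin_pos_of_pos_of_lt_pi hx0 (by nlinarith [hx.2])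
    have hx := hx.1
    unfold cotRemainder
    rw [show 2 * π * (K + 1 : ℕ) * x = 2 * (π / 2 * x) + π * (2 * K + 1) * x by push_cast; ring,
      show 2 * π * K * x = π * (2 * K + 1) * x - 2 * (π / 2 * x) by ring]
    simp only [cos_add, cos_sub, sin_add, sin_sub, cos_two_mul, sin_two_mul]
    generalize sin (π / 2 * x) = s at hs
    field_simp
    ring

/-- The asymptotics `∫₀¹ (1 - cos (2πKx)) / x dx - log (2πK) → γ` of the cosine integral. -/
lemma tendsto_integral_one_sub_cos_div :
    Tendsto (fun K : ℕ => (∫ x in (0 : ℝ)..1, (1 - cos (2 * π * K * x)) / x) - log (2 * π * K))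
      atTop (𝓝 eulerMascheroniConstant) := by
  have h := (tendsto_sum_one_div_odd.sub
    (tendsto_integral_cos_mul intervalIntegrable_cotRemainder))
  rw [sub_zero] at h
  refine h.congr' ?_
  filter_upwards [eventually_gt_atTop 0] with K hK
  have hc := intervalIntegrable_cotRemainder.continuousOn_mul
    (g := fun x => cos (2 * π * K * x)) (by fun_prop)
  have hc1 := intervalIntegrable_cotRemainder.continuousOn_mul
    (g := fun x => 1 - cos (2 * π * K * x)) (by fun_prop)
  rw [← integral_conj_kernel, intervalIntegral.integral_sub
    ((continuous_one_sub_cos_div _).intervalIntegrable 0 1) hc1]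
  simp only [sub_mul, one_mul]
  rw [intervalIntegral.integral_sub intervalIntegrable_cotRemainder hc, integral_cotRemainder]
  have hK' : (K : ℝ) ≠ 0 := by positivity
  have hpi := pi_ne_zero
  rw [log_mul (by norm_num) hK', log_mul (by positivity) hK', log_mul (by norm_num) hpi,
    log_div hpi (by norm_num), show (4 : ℝ) = 2 ^ 2 by norm_num, log_pow]
  push_cast; ring

lemma abs_log_Gamma_sub_logGammaSeq_le {x : ℝ} (hx : x ∈ Ioc (0 : ℝ) 1) {n : ℕ} (hn : n ≠ 0) :
    |log (Gamma x) - BohrMollerup.logGammaSeq x n| ≤ log (n + 1) - log n := by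
  have hf {y : ℝ} (hy : 0 < y) : (log ∘ Gamma) (y + 1) = (log ∘ Gamma) y + log y := by
    rw [Function.comp_apply, Gamma_add_one hy.ne', log_mul hy.ne' (Gamma_pos_of_pos hy).ne',
      add_comm, Function.comp_apply]
  have h1 := BohrMollerup.ge_logGammaSeq convexOn_log_Gamma hf hx.1 hn
  have h2 := BohrMollerup.le_logGammaSeq convexOn_log_Gamma hf hx.1 hx.2 n
  simp only [Function.comp_apply, Gamma_one, log_one, zero_add] at h1 h2
  have h3 : log (n : ℝ) ≤ log (n + 1) :=
    log_le_log (by positivity) (by linarith)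
  rw [abs_of_nonneg (by linarith)]
  nlinarith [hx.2]

lemma memLp_log : MemLp log 2 (volume.restrict (Ioc (0 : ℝ) 1)) := by
  rw [memLp_two_iff_integrable_sq measurable_log.aestronglyMeasurable]
  have hi : IntegrableOn (fun x : ℝ => 16 * x ^ (-(1 / 2) : ℝ)) (Ioc 0 1) :=
    ((intervalIntegrable_iff_integrableOn_Ioc_of_le zero_le_one).1
      (intervalIntegral.intervalIntegrable_rpow' (by norm_num))).const_mul 16
  refine Integrable.mono' hi (measurable_log.pow_const 2).aestronglyMeasurable ?_
  filter_upwards [ae_restrict_mem measurableSet_Ioc] with x hx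
  have h := (abs_log_mul_self_rpow_lt x (1 / 4) hx.1 hx.2 (by norm_num)).le
  have h2 : (log x * x ^ (1 / 4 : ℝ)) ^ 2 ≤ 16 := by
    rw [← sq_abs]
    have := abs_nonneg (log x * x ^ (1 / 4 : ℝ))
    norm_num at h this ⊢
    nlinarith
  rw [norm_of_nonneg (sq_nonneg _), rpow_neg hx.1.le, ← div_eq_mul_inv,
    le_div_iff₀ (rpow_pos_of_pos hx.1 _)]
  rwa [mul_pow, ← rpow_natCast (x ^ (1 / 4 : ℝ)), ← rpow_mul hx.1.le,
    show (1 / 4 : ℝ) * (2 : ℕ) = 1 / 2 by norm_num] at h2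

lemma memLp_log_Gamma : MemLp (fun x => log (Gamma x)) 2 (volume.restrict (Ioc (0 : ℝ) 1)) := by
  have hc : ContinuousOn (log ∘ Gamma) (Ioi 0) := convexOn_log_Gamma.continuousOn isOpen_Ioi
  have h2 : MemLp (fun x => |log x| + 2) 2 (volume.restrict (Ioc (0 : ℝ) 1)) :=
    memLp_log.abs.add (memLp_const 2)
  refine h2.mono ((hc.mono Ioc_subset_Ioi_self).aestronglyMeasurable measurableSet_Ioc) ?_
  filter_upwards [ae_restrict_mem measurableSet_Ioc] with x hx
  have h := abs_log_Gamma_sub_logGammaSeq_le hx one_ne_zero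
  have hl : log (x + 1) ≤ 1 := by
    have := log_le_sub_one_of_pos (show 0 < x + 1 by linarith [hx.1])
    linarith [hx.2]
  have hl0 : 0 ≤ log (x + 1) := log_nonneg (by linarith [hx.1])
  have hl2 : log (1 + 1 : ℝ) ≤ 1 := by
    have := log_le_sub_one_of_pos (show 0 < (1 + 1 : ℝ) by norm_num)
    linarith
  simp only [BohrMollerup.logGammaSeq, Finset.sum_range_succ] at h
  simp at h
  rw [norm_eq_abs, norm_of_nonneg (by positivity)]
  grind

lemma intervalIntegrable_log_Gamma :
    IntervalIntegrable (fun x => log (Gamma x)) volume 0 1 :=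
  (intervalIntegrable_iff_integrableOn_Ioc_of_le zero_le_one).2
    (memLp_log_Gamma.integrable (by norm_num))

lemma integral_id_mul_sin {k : ℕ} (hk : k ≠ 0) :
    ∫ x in (0 : ℝ)..1, x * sin (2 * π * k * x) = -1 / (2 * π * k) := by
  have hc : 2 * π * k ≠ 0 := by positivity
  have hd (x : ℝ) : HasDerivAt (fun x => -x * cos (2 * π * k * x) / (2 * π * k) +
      sin (2 * π * k * x) / (2 * π * k) ^ 2) (x * sin (2 * π * k * x)) x := by
    have e : HasDerivAt (fun x : ℝ => 2 * π * k * x) (2 * π * k) x := by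
      simpa using (hasDerivAt_id x).const_mul (2 * π * k)
    convert! (((hasDerivAt_id x).neg.mul e.cos).div_const (2 * π * k)).add
      (e.sin.div_const ((2 * π * k) ^ 2)) using 1
    simp
    field_simp
    ring
  rw [intervalIntegral.integral_eq_sub_of_hasDerivAt (fun x _ => hd x)
    (by apply Continuous.intervalIntegrable; fun_prop)]
  have hs : sin (2 * π * k * 1) = 0 := by
    rw [show 2 * π * k * 1 = (2 * k : ℕ) * π by push_cast; ring, sin_nat_mul_pi]
  have hcs : cos (2 * π * k * 1) = 1 := by
    rw [show 2 * π * k * 1 = k * (2 * π) by ring, cos_nat_mul_two_pi]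
  rw [hs, hcs]
  simp

lemma integral_log_mul_sin {k T : ℕ} (hk : k ≠ 0) :
    ∫ t in (0 : ℝ)..T, log t * sin (2 * π * k * t) =
      -(1 / (2 * π * k)) * ∫ x in (0 : ℝ)..1, (1 - cos (2 * π * (k * T : ℕ) * x)) / x := by
  have hc : 2 * π * k ≠ 0 := by positivity
  set c := 2 * π * k with hcdef
  have hlog : IntervalIntegrable (fun t => log t * sin (c * t)) volume 0 (T : ℝ) :=
    intervalIntegral.intervalIntegrable_log'.mul_continuousOn (by fun_prop)
  have hq := (continuous_one_sub_cos_div c).intervalIntegrable (μ := volume) 0 (T : ℝ)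
  have hparts : ∫ t in (0 : ℝ)..T, (c * (log t * sin (c * t)) + (1 - cos (c * t)) / t) = 0 := by
    have hcont : Continuous fun t => (1 - cos (c * t)) * log t := by
      have : (fun t => (1 - cos (c * t)) * log t) =
          fun t => (1 - cos (c * t)) / t * (t * log t) := by
        funext t
        rcases eq_or_ne t 0 with rfl | ht
        · simp
        · field_simp
      rw [this]
      exact (continuous_one_sub_cos_div c).mul continuous_mul_log
    rw [intervalIntegral.integral_eq_sub_of_hasDerivAt_of_le
      (f := fun t => (1 - cos (c * t)) * log t) (by positivity) hcont.continuousOn ?_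
      ((hlog.const_mul c).add hq)]
    · have : cos (c * T) = 1 := by
        rw [hcdef, show 2 * π * k * T = (k * T : ℕ) * (2 * π) by push_cast; ring,
          cos_nat_mul_two_pi]
      simp [this]
    · intro t ht
      have e : HasDerivAt (fun x : ℝ => c * x) c t := by
        simpa using (hasDerivAt_id t).const_mul c
      convert! (e.cos.const_sub 1).mul (hasDerivAt_log ht.1.ne') using 1
      field_simp
  rw [intervalIntegral.integral_add (hlog.const_mul c) hq, intervalIntegral.integral_const_mul]
    at hparts
  have hscale : ∫ t in (0 : ℝ)..T, (1 - cos (c * t)) / t =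
      ∫ x in (0 : ℝ)..1, (1 - cos (2 * π * (k * T : ℕ) * x)) / x := by
    rcases eq_or_ne T 0 with rfl | hT
    · simp
    have hT' : (T : ℝ) ≠ 0 := by positivity
    have := intervalIntegral.mul_integral_comp_mul_left (a := 0) (b := 1)
      (f := fun t => (1 - cos (c * t)) / t) (T : ℝ)
    rw [mul_zero, mul_one] at this
    rw [← this, ← intervalIntegral.integral_const_mul]
    congr 1; funext x
    rw [hcdef, show 2 * π * k * (T * x) = 2 * π * (k * T : ℕ) * x by push_cast; ring]
    rcases eq_or_ne x 0 with rfl | hx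
    · simp
    · field_simp
  rw [← hscale]
  field_simp
  linarith

lemma intervalIntegrable_log_add (m a b : ℝ) :
    IntervalIntegrable (fun x => log (x + m)) volume a b := by
  simpa using (intervalIntegral.intervalIntegrable_log' (a := a + m) (b := b + m)).comp_add_right m

lemma intervalIntegrable_logGammaSeq (n : ℕ) :
    IntervalIntegrable (fun x => BohrMollerup.logGammaSeq x n) volume 0 1 := by
  unfold BohrMollerup.logGammaSeq
  refine IntervalIntegrable.sub (by apply Continuous.intervalIntegrable; fun_prop) ?_
  simpa only [Finset.sum_fn] using IntervalIntegrable.sum (Finset.range (n + 1))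
    fun m _ => intervalIntegrable_log_add (m : ℝ) 0 1

lemma integral_logGammaSeq_mul_sin {k : ℕ} (hk : k ≠ 0) (n : ℕ) :
    ∫ x in (0 : ℝ)..1, BohrMollerup.logGammaSeq x n * sin (2 * π * k * x) =
      1 / (2 * π * k) * ((∫ x in (0 : ℝ)..1, (1 - cos (2 * π * (k * (n + 1) : ℕ) * x)) / x) -
        log n) := by
  have hsum : ∑ m ∈ Finset.range (n + 1), ∫ x in (0 : ℝ)..1, log (x + m) * sin (2 * π * k * x) =
      ∫ t in (0 : ℝ)..(n + 1 : ℕ), log t * sin (2 * π * k * t) := by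
    have := intervalIntegral.sum_integral_adjacent_intervals (μ := volume) (n := n + 1)
      (f := fun t => log t * sin (2 * π * k * t)) (a := fun m : ℕ => (m : ℝ))
      (fun m _ => intervalIntegral.intervalIntegrable_log'.mul_continuousOn (by fun_prop))
    rw [Nat.cast_zero] at this
    rw [← this]
    refine Finset.sum_congr rfl fun m _ => ?_
    have h := intervalIntegral.integral_comp_add_right (a := 0) (b := 1)
      (fun t => log t * sin (2 * π * k * t)) (m : ℝ)
    rw [zero_add, add_comm (1 : ℝ)] at h
    rw [Nat.cast_succ, ← h]
    congr 1; funext x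
    rw [show 2 * π * k * (x + m) = 2 * π * k * x + (k * m : ℕ) * (2 * π) by push_cast; ring,
      sin_add_nat_mul_two_pi]
  have hi (m : ℕ) : IntervalIntegrable (fun x => log (x + m) * sin (2 * π * k * x)) volume 0 1 :=
    (intervalIntegrable_log_add _ _ _).mul_continuousOn (by fun_prop)
  unfold BohrMollerup.logGammaSeq
  have : ∀ x : ℝ, (x * log n + log n.factorial - ∑ m ∈ Finset.range (n + 1), log (x + m)) *
      sin (2 * π * k * x) = log n * (x * sin (2 * π * k * x)) +
        log n.factorial * sin (2 * π * k * x) -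
        ∑ m ∈ Finset.range (n + 1), log (x + m) * sin (2 * π * k * x) := by
    intro x; rw [← Finset.sum_mul]; ring
  simp only [this]
  rw [intervalIntegral.integral_sub (by apply Continuous.intervalIntegrable; fun_prop)
    (by simpa only [Finset.sum_fn] using IntervalIntegrable.sum _ fun m _ => hi m),
    intervalIntegral.integral_add
    (by apply Continuous.intervalIntegrable; fun_prop)
    (by apply Continuous.intervalIntegrable; fun_prop),
    intervalIntegral.integral_finsetSum fun m _ => hi m, hsum, integral_log_mul_sin hk,
    intervalIntegral.integral_const_mul, intervalIntegral.integral_const_mul,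
    integral_sin_two_pi, integral_id_mul_sin hk]
  ring

/-- The sine Fourier coefficients of `log Γ` on `(0, 1)`, as in Kummer's series. -/
lemma integral_log_Gamma_mul_sin {k : ℕ} (hk : k ≠ 0) :
    ∫ x in (0 : ℝ)..1, log (Gamma x) * sin (2 * π * k * x) =
      (log (2 * π) + eulerMascheroniConstant + log k) / (2 * π * k) := by
  have hlim1 : Tendsto (fun n : ℕ => ∫ x in (0 : ℝ)..1,
      BohrMollerup.logGammaSeq x n * sin (2 * π * k * x)) atTop
      (𝓝 (∫ x in (0 : ℝ)..1, log (Gamma x) * sin (2 * π * k * x))) := by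
    rw [tendsto_iff_norm_sub_tendsto_zero]
    refine squeeze_zero' (.of_forall fun _ => norm_nonneg _) ?_
      tendsto_log_nat_add_one_sub_log
    filter_upwards [eventually_ne_atTop 0] with n hn
    rw [← intervalIntegral.integral_sub
      ((intervalIntegrable_logGammaSeq n).mul_continuousOn (by fun_prop))
      (intervalIntegrable_log_Gamma.mul_continuousOn (by fun_prop))]
    have := intervalIntegral.norm_integral_le_of_norm_le_const (a := 0) (b := 1)
      (f := fun x => BohrMollerup.logGammaSeq x n * sin (2 * π * k * x) -
        log (Gamma x) * sin (2 * π * k * x)) (C := log (n + 1) - log n) ?_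
    · simpa using this
    intro x hx
    rw [uIoc_of_le zero_le_one] at hx
    have h := abs_log_Gamma_sub_logGammaSeq_le hx hn
    rw [← sub_mul, norm_mul, norm_eq_abs, norm_eq_abs, abs_sub_comm]
    exact (mul_le_of_le_one_right (abs_nonneg _) (abs_sin_le_one _)).trans h
  refine tendsto_nhds_unique hlim1 ?_
  have hK : Tendsto (fun n : ℕ => k * (n + 1)) atTop atTop :=
    (tendsto_add_atTop_nat 1).const_mul_atTop' (Nat.pos_of_ne_zero hk)
  have h := (((tendsto_integral_one_sub_cos_div.comp hK).add
    tendsto_log_nat_add_one_sub_log).add_const (log (2 * π) + log k)).const_mul (1 / (2 * π * k))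
  rw [show 1 / (2 * π * k) * (eulerMascheroniConstant + 0 + (log (2 * π) + log k)) =
    (log (2 * π) + eulerMascheroniConstant + log k) / (2 * π * k) by ring] at h
  refine h.congr fun n => ?_
  rw [integral_logGammaSeq_mul_sin hk, Function.comp_apply]
  have hk' : (k : ℝ) ≠ 0 := by positivity
  rw [show log (2 * π * (k * (n + 1) : ℕ)) = log (2 * π) + log k + log (n + 1) by
    push_cast
    rw [log_mul (by positivity) (by positivity), log_mul hk' (by positivity)]; ring]
  ring

lemma intervalIntegrable_log_sin_pi_mul :
    IntervalIntegrable (fun x => log (sin (π * x))) volume 0 1 := by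
  simpa [pi_ne_zero] using (intervalIntegrable_log_sin (a := 0) (b := π)).comp_mul_left (c := π)

lemma integral_log_sin_mul_cos :
    ∫ x in (0 : ℝ)..1, log (sin (π * x)) * cos (2 * π * x) = -(1 / 2) := by
  have hpi := pi_ne_zero
  rw [intervalIntegral.integral_eq_sub_of_hasDerivAt_of_le
    (f := fun x => cos (π * x) / π * (sin (π * x) * log (sin (π * x))) - x / 2 -
      sin (2 * π * x) / (4 * π)) zero_le_one ?_ ?_
    (intervalIntegrable_log_sin_pi_mul.mul_continuousOn (by fun_prop))]
  · simp
  · have := continuous_mul_log.comp (by fun_prop : Continuous fun x => sin (π * x))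
    simp only [Function.comp_def] at this
    fun_prop
  · intro x hx
    have hs : sin (π * x) ≠ 0 := (sin_pos_of_pos_of_lt_pi (mul_pos pi_pos hx.1)
      (by nlinarith [hx.2, pi_pos])).ne'
    have e : HasDerivAt (fun x : ℝ => π * x) π x := by
      simpa using (hasDerivAt_id x).const_mul π
    have e2 : HasDerivAt (fun x : ℝ => 2 * π * x) (2 * π) x := by
      simpa using (hasDerivAt_id x).const_mul (2 * π)
    convert! (((e.cos.div_const π).mul (e.sin.mul (e.sin.log hs))).sub
      ((hasDerivAt_id x).div_const 2)).sub (e2.sin.div_const (4 * π)) using 1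
    rw [show 2 * π * x = 2 * (π * x) by ring, cos_two_mul]
    have h1 := sin_sq (π * x)
    simp only [Pi.mul_apply]
    field_simp
    linear_combination 8 * log (sin (π * x)) * h1

lemma integral_cos_two_pi : ∫ x in (0 : ℝ)..1, cos (2 * π * x) = 0 := by
  rw [intervalIntegral.integral_comp_mul_left (fun x => cos x) (by positivity)]
  simp

lemma integral_log_Gamma_mul_cos :
    ∫ x in (0 : ℝ)..1, log (Gamma x) * cos (2 * π * x) = 1 / 4 := by
  have hi : IntervalIntegrable (fun x => log (Gamma x) * cos (2 * π * x)) volume 0 1 :=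
    intervalIntegrable_log_Gamma.mul_continuousOn (by fun_prop)
  have hflip : ∫ x in (0 : ℝ)..1, log (Gamma (1 - x)) * cos (2 * π * x) =
      ∫ x in (0 : ℝ)..1, log (Gamma x) * cos (2 * π * x) := by
    have := intervalIntegral.integral_comp_sub_left (a := 0) (b := 1)
      (fun x => log (Gamma x) * cos (2 * π * x)) 1
    simp only [sub_self, sub_zero] at this
    rw [← this]
    congr 1; funext x
    rw [show 2 * π * (1 - x) = 2 * π - 2 * π * x by ring, cos_two_pi_sub]
  have hi' : IntervalIntegrable (fun x => log (Gamma (1 - x)) * cos (2 * π * x)) volume 0 1 := by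
    have := (intervalIntegrable_log_Gamma.comp_sub_left 1).symm
    simp only [sub_self, sub_zero] at this
    exact this.mul_continuousOn (by fun_prop)
  have hsum : (∫ x in (0 : ℝ)..1, log (Gamma x) * cos (2 * π * x)) +
      ∫ x in (0 : ℝ)..1, log (Gamma (1 - x)) * cos (2 * π * x) = 1 / 2 := by
    rw [← intervalIntegral.integral_add hi hi']
    have : ∫ x in (0 : ℝ)..1, (log π * cos (2 * π * x) - log (sin (π * x)) * cos (2 * π * x)) =
        1 / 2 := by
      rw [intervalIntegral.integral_sub (by apply Continuous.intervalIntegrable; fun_prop)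
        (intervalIntegrable_log_sin_pi_mul.mul_continuousOn (by fun_prop)),
        intervalIntegral.integral_const_mul,
        integral_cos_two_pi, integral_log_sin_mul_cos]
      norm_num
    rw [← this]
    refine intervalIntegral.integral_congr_Ioo_of_le zero_le_one fun x hx => ?_
    have hs : sin (π * x) ≠ 0 := (sin_pos_of_pos_of_lt_pi (mul_pos pi_pos hx.1)
      (by nlinarith [hx.2, pi_pos])).ne'
    have h1 := (Gamma_pos_of_pos hx.1).ne'
    have h2 := (Gamma_pos_of_pos (show 0 < 1 - x by linarith [hx.2])).ne'
    have := congrArg log (Gamma_mul_Gamma_one_sub x)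
    rw [log_mul h1 h2, log_div pi_ne_zero hs] at this
    rw [← add_mul, this, sub_mul]
  linarith

lemma hasSum_fourierCoeffOn_mul {a b : ℝ} (hab : a < b) {f g : ℝ → ℂ}
    (hf : MemLp f 2 (volume.restrict (Ioc a b))) (hg : MemLp g 2 (volume.restrict (Ioc a b))) :
    HasSum (fun n => star (fourierCoeffOn hab f n) * fourierCoeffOn hab g n)
      ((b - a)⁻¹ • ∫ x in a..b, star (f x) * g x) := by
  have := Fact.mk (by linarith : 0 < b - a)
  rw [← add_sub_cancel a b] at hf hg
  have hF := hf.memLp_liftIoc.haarAddCircle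
  have hG := hg.memLp_liftIoc.haarAddCircle
  convert! fourierBasis.hasSum_inner_mul_inner hF.toLp hG.toLp using 1
  · funext n
    rw [← HilbertBasis.repr_apply_apply, fourierBasis_repr, ← inner_conj_symm,
      ← HilbertBasis.repr_apply_apply, fourierBasis_repr]
    simp [fourierCoeff_congr_ae hF.coeFn_toLp, fourierCoeff_congr_ae hG.coeFn_toLp,
      fourierCoeff_liftIoc_eq]
  · rw [L2.inner_def]
    nth_rw 2 [← add_sub_cancel a b]
    rw [← AddCircle.integral_liftIoc_eq_intervalIntegral, ← AddCircle.integral_haarAddCircle]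
    apply integral_congr_ae
    filter_upwards [hF.coeFn_toLp, hG.coeFn_toLp] with x hx hy
    rw [hx, hy, RCLike.inner_apply, mul_comm]
    rfl

lemma fourierCoeffOn_zero_one_ofReal {f : ℝ → ℝ} (hf : IntervalIntegrable f volume 0 1) (n : ℤ) :
    fourierCoeffOn (zero_lt_one (α := ℝ)) (fun x => (f x : ℂ)) n =
      ((∫ x in (0 : ℝ)..1, f x * cos (2 * π * n * x) : ℝ) : ℂ) -
        ((∫ x in (0 : ℝ)..1, f x * sin (2 * π * n * x) : ℝ) : ℂ) * Complex.I := by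
  have hc : IntervalIntegrable (fun x => ((f x * cos (2 * π * n * x) : ℝ) : ℂ)) volume 0 1 := by
    have h : IntervalIntegrable (fun x => f x * cos (2 * π * n * x)) volume 0 1 :=
      hf.mul_continuousOn (by fun_prop)
    exact ⟨h.1.ofReal, h.2.ofReal⟩
  have hs : IntervalIntegrable (fun x => ((f x * sin (2 * π * n * x) : ℝ) : ℂ)) volume 0 1 := by
    have h : IntervalIntegrable (fun x => f x * sin (2 * π * n * x)) volume 0 1 :=
      hf.mul_continuousOn (by fun_prop)
    exact ⟨h.1.ofReal, h.2.ofReal⟩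
  rw [fourierCoeffOn_eq_integral, ← intervalIntegral.integral_ofReal,
    ← intervalIntegral.integral_ofReal, ← intervalIntegral.integral_mul_const,
    ← intervalIntegral.integral_sub hc (hs.mul_const _)]
  simp only [sub_zero, div_one, one_smul]
  refine intervalIntegral.integral_congr fun x _ => ?_
  simp only [fourier_coe_apply, smul_eq_mul]
  rw [show 2 * (π : ℂ) * Complex.I * ((-n : ℤ) : ℂ) * x / ((1 - 0 : ℝ) : ℂ) =
    ((-(2 * π * n * x) : ℝ) : ℂ) * Complex.I by push_cast; ring, Complex.exp_mul_I,
    ← Complex.ofReal_cos, ← Complex.ofReal_sin, cos_neg, sin_neg]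
  push_cast
  ring

/-- Parseval's identity on `(0, 1)` in terms of cosine and sine coefficients. -/
lemma hasSum_cos_sin_coeff_mul {f g : ℝ → ℝ} (hf : MemLp f 2 (volume.restrict (Ioc 0 1)))
    (hg : MemLp g 2 (volume.restrict (Ioc 0 1))) :
    HasSum (fun n : ℕ => 2 *
        ((∫ x in (0 : ℝ)..1, f x * cos (2 * π * n * x)) *
          (∫ x in (0 : ℝ)..1, g x * cos (2 * π * n * x)) +
        (∫ x in (0 : ℝ)..1, f x * sin (2 * π * n * x)) *
          (∫ x in (0 : ℝ)..1, g x * sin (2 * π * n * x))))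
      ((∫ x in (0 : ℝ)..1, f x * g x) + (∫ x in (0 : ℝ)..1, f x) * ∫ x in (0 : ℝ)..1, g x) := by
  have hfi : IntervalIntegrable f volume 0 1 :=
    (intervalIntegrable_iff_integrableOn_Ioc_of_le zero_le_one).2 (hf.integrable (by norm_num))
  have hgi : IntervalIntegrable g volume 0 1 :=
    (intervalIntegrable_iff_integrableOn_Ioc_of_le zero_le_one).2 (hg.integrable (by norm_num))
  have hfC : MemLp (fun x => (f x : ℂ)) 2 (volume.restrict (Ioc 0 1)) := hf.ofReal
  have hgC : MemLp (fun x => (g x : ℂ)) 2 (volume.restrict (Ioc 0 1)) := hg.ofReal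
  have h := (hasSum_fourierCoeffOn_mul zero_lt_one hfC hgC).nat_add_neg
  convert! Complex.hasSum_re h using 1
  · funext n
    rw [fourierCoeffOn_zero_one_ofReal hfi, fourierCoeffOn_zero_one_ofReal hgi,
      fourierCoeffOn_zero_one_ofReal hfi, fourierCoeffOn_zero_one_ofReal hgi]
    simp only [Int.cast_neg, Int.cast_natCast, mul_neg, neg_mul, cos_neg, sin_neg,
      intervalIntegral.integral_neg]
    simp
    ring
  · rw [fourierCoeffOn_zero_one_ofReal hfi, fourierCoeffOn_zero_one_ofReal hgi]
    have : ∫ x in (0 : ℝ)..1, star (f x : ℂ) * (g x : ℂ) =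
        ((∫ x in (0 : ℝ)..1, f x * g x : ℝ) : ℂ) := by
      rw [← intervalIntegral.integral_ofReal]
      simp
    simp at this ⊢
    simp [this]

lemma integral_sub_half_mul_sin (m : ℕ) :
    ∫ x in (0 : ℝ)..1, (x - 1 / 2) * sin (2 * π * m * x) = -1 / (2 * π * m) := by
  rcases eq_or_ne m 0 with rfl | hm
  · simp
  simp only [sub_mul]
  rw [intervalIntegral.integral_sub (by apply Continuous.intervalIntegrable; fun_prop)
    (by apply Continuous.intervalIntegrable; fun_prop), intervalIntegral.integral_const_mul,
    integral_sin_two_pi, integral_id_mul_sin hm]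
  simp

lemma integral_sub_half_mul_cos_mul_sin (j : ℕ) :
    ∫ x in (0 : ℝ)..1, (x - 1 / 2) * cos (2 * π * x) * sin (2 * π * (j + 1 : ℕ) * x) =
      -(1 / (4 * π)) * (1 / (j + 2) + 1 / j) := by
  have h : ∀ x : ℝ, (x - 1 / 2) * cos (2 * π * x) * sin (2 * π * (j + 1 : ℕ) * x) =
      1 / 2 * ((x - 1 / 2) * sin (2 * π * (j + 2 : ℕ) * x)) +
        1 / 2 * ((x - 1 / 2) * sin (2 * π * j * x)) := by
    intro x
    rw [show 2 * π * (j + 2 : ℕ) * x = 2 * π * (j + 1 : ℕ) * x + 2 * π * x by push_cast; ring,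
      show 2 * π * j * x = 2 * π * (j + 1 : ℕ) * x - 2 * π * x by push_cast; ring,
      sin_add, sin_sub]
    ring
  simp only [h]
  rw [intervalIntegral.integral_add (by apply Continuous.intervalIntegrable; fun_prop)
    (by apply Continuous.intervalIntegrable; fun_prop), intervalIntegral.integral_const_mul,
    intervalIntegral.integral_const_mul, integral_sub_half_mul_sin, integral_sub_half_mul_sin]
  push_cast
  simp only [div_eq_mul_inv, mul_inv]
  ring

lemma integral_sub_half_mul_cos_mul_cos (n : ℕ) :
    ∫ x in (0 : ℝ)..1, (x - 1 / 2) * cos (2 * π * x) * cos (2 * π * n * x) = 0 := by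
  have h := intervalIntegral.integral_comp_sub_left (a := 0) (b := 1)
    (fun x => (x - 1 / 2) * cos (2 * π * x) * cos (2 * π * n * x)) 1
  simp only [sub_self, sub_zero] at h
  have h2 : ∀ x : ℝ, (1 - x - 1 / 2) * cos (2 * π * (1 - x)) * cos (2 * π * n * (1 - x)) =
      -((x - 1 / 2) * cos (2 * π * x) * cos (2 * π * n * x)) := by
    intro x
    rw [show 2 * π * (1 - x) = 2 * π - 2 * π * x by ring, cos_two_pi_sub,
      show 2 * π * n * (1 - x) = n * (2 * π) - 2 * π * n * x by ring, cos_nat_mul_two_pi_sub]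
    ring
  simp only [h2, intervalIntegral.integral_neg] at h
  linarith

lemma hasSum_one_div_sq_sub_one : HasSum (fun n : ℕ => 1 / (((n : ℝ) + 2) ^ 2 - 1)) (3 / 4) := by
  have hpart (N : ℕ) : ∑ n ∈ Finset.range N, 1 / (((n : ℝ) + 2) ^ 2 - 1) =
      3 / 4 - (1 / ((N : ℝ) + 1) + 1 / ((N + 1 : ℕ) + 1 : ℝ)) / 2 := by
    induction N with
    | zero => norm_num
    | succ N ih =>
      rw [Finset.sum_range_succ, ih, show ((N : ℝ) + 2) ^ 2 - 1 = (N + 1) * (N + 3) by ring]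
      push_cast
      field_simp
      ring
  rw [hasSum_iff_tendsto_nat_of_nonneg]
  · simp only [hpart]
    have h := tendsto_one_div_add_atTop_nhds_zero_nat (𝕜 := ℝ)
    simpa using ((h.add (h.comp (tendsto_add_atTop_nat 1))).div_const 2).const_sub (3 / 4)
  · intro n
    have : (0 : ℝ) ≤ n := n.cast_nonneg
    exact one_div_nonneg.2 (by nlinarith)

/-- `∫₀¹ x·log Γ(x)·cos(2πx) dx = 1/8 − C/(2π²) − (1/(2π²))·∑_{n=2}^∞ (log n)/(n² − 1)`,
where `C = log(2π) + γ`. -/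
theorem integral_x_log_Gamma_cos :
    ∫ x in (0:ℝ)..1, x * Real.log (Real.Gamma x) * Real.cos (2 * π * x) =
      1 / 8 - (Real.log (2 * π) + Real.eulerMascheroniConstant) / (2 * π ^ 2)
        - (1 / (2 * π ^ 2)) * ∑' n : ℕ, Real.log (n + 2) / (((n : ℝ) + 2) ^ 2 - 1) := by
  set C := log (2 * π) + eulerMascheroniConstant with hC
  set I := ∫ x in (0 : ℝ)..1, log (Gamma x) * ((x - 1 / 2) * cos (2 * π * x)) with hI
  have hpi := pi_pos
  have hsplit : ∫ x in (0:ℝ)..1, x * Real.log (Real.Gamma x) * Real.cos (2 * π * x) =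
      I + 1 / 2 * (1 / 4) := by
    rw [hI, ← integral_log_Gamma_mul_cos, ← intervalIntegral.integral_const_mul,
      ← intervalIntegral.integral_add
        (intervalIntegrable_log_Gamma.mul_continuousOn (by fun_prop))
        ((intervalIntegrable_log_Gamma.mul_continuousOn (by fun_prop)).const_mul _)]
    congr 1; funext x; ring
  have hmem : MemLp (fun x : ℝ => (x - 1 / 2) * cos (2 * π * x)) 2
      (volume.restrict (Ioc 0 1)) := by
    refine MemLp.of_bound (by fun_prop) 1 ?_
    filter_upwards [ae_restrict_mem measurableSet_Ioc] with x hx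
    rw [norm_mul, norm_eq_abs, norm_eq_abs]
    exact mul_le_one₀ (abs_le.2 ⟨by linarith [hx.1], by linarith [hx.2]⟩) (abs_nonneg _)
      (abs_cos_le_one _)
  have hmean : ∫ x in (0 : ℝ)..1, (x - 1 / 2) * cos (2 * π * x) = 0 := by
    simpa using integral_sub_half_mul_cos_mul_cos 0
  have hpars := hasSum_cos_sin_coeff_mul memLp_log_Gamma hmem
  simp only [integral_sub_half_mul_cos_mul_cos, hmean, mul_zero, zero_add, add_zero] at hpars
  rw [← hI, ← hasSum_nat_add_iff' 2] at hpars
  have hone := integral_sub_half_mul_cos_mul_sin 0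
  rw [zero_add] at hone
  rw [Finset.sum_range_succ, Finset.sum_range_one, hone, integral_log_Gamma_mul_sin one_ne_zero,
    ← hC] at hpars
  have hlog : HasSum (fun n : ℕ => log (n + 2) / (((n : ℝ) + 2) ^ 2 - 1))
      (-(2 * π ^ 2) * (I + C / (8 * π ^ 2)) - C * (3 / 4)) := by
    convert! (hpars.mul_left (-(2 * π ^ 2))).sub (hasSum_one_div_sq_sub_one.mul_left C) using 1
    · funext n
      rw [show n + 2 = n + 1 + 1 by ring, integral_sub_half_mul_cos_mul_sin,
        integral_log_Gamma_mul_sin (Nat.succ_ne_zero _), ← hC,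
        show ((n : ℝ) + 2) ^ 2 - 1 = (n + 1) * (n + 3) by ring]
      push_cast
      rw [show (n : ℝ) + 1 + 1 = n + 2 by ring]
      field_simp
      ring
    · simp
      field_simp
      ring
  rw [hsplit, hlog.tsum_eq]
  field_simp
  ring
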